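/- arXiv:1803.10702 — 2 statements merged into one kernel-verified Lean document; each statement's English description precedes it below -/
import Mathlib

section
/- Let n ≥ 2, let B ⊆ ℝⁿ be a convex body with nonempty interior satisfying B = −B, and let k ∈ {0,…,n−2}. If B has a support set S with dim(S) > k, then there exists a two-point set {x₁,x₂} ⊆ ℝⁿ with dim(cc({x₁,x₂},B)) > k; indeed, for any x ∈ relint(S) one has dim(cc({x,−x},B)) > k. -/
/-!
Let `S = {y ∈ B : ⟪y, u⟫ = h}` with `h = suppFn B u`, and let `x ∈ relint S`. As `B = -B` has
interior points, `h > 0`. If `x` and `-x` both lie in `ρ • B + {c}`, comparing their values under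
`⟪·, u⟫` gives `2 * h ≤ 2 * ρ * h`, so `ρ ≥ 1`; since `±x ∈ B`, the circumradius of `{x, -x}` is
exactly `1`. By symmetry, the circumcenters are thus the `c` with `x + c ∈ B` and `x - c ∈ B`.
Every direction `v` of the affine span of `S` satisfies `x ± ε • v ∈ S ⊆ B` for small `ε > 0`, so
`0` and `ε • v` are circumcenters and the Chebyshev set has dimension at least that of `S`.
-/

open Set Pointwise RealInnerProductSpace

/-- A convex body: a nonempty compact convex set. -/
def IsConvexBody {n : ℕ} (K : Set (EuclideanSpace ℝ (Fin n))) : Prop :=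
  K.Nonempty ∧ IsCompact K ∧ Convex ℝ K

/-- The circumradius `R(A,C)` of `A` with respect to the gauge body `C`:
`inf {ρ ≥ 0 : ∃ x, A ⊆ ρC + x}`. -/
noncomputable def circR {n : ℕ} (A C : Set (EuclideanSpace ℝ (Fin n))) : ℝ :=
  sInf {ρ : ℝ | 0 ≤ ρ ∧ ∃ x, A ⊆ ρ • C + {x}}

/-- The set of circumcenters (Chebyshev set) `cc(A,C) = {x : A ⊆ R(A,C)·C + x}`. -/
noncomputable def ccSet {n : ℕ} (A C : Set (EuclideanSpace ℝ (Fin n))) :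
    Set (EuclideanSpace ℝ (Fin n)) :=
  {x | A ⊆ circR A C • C + {x}}

/-- The support function `h(K,u) = sup {⟨y,u⟩ : y ∈ K}`. -/
noncomputable def suppFn {n : ℕ} (K : Set (EuclideanSpace ℝ (Fin n)))
    (u : EuclideanSpace ℝ (Fin n)) : ℝ :=
  sSup ((fun y => ⟪y, u⟫) '' K)

/-- The normal cone `N(K,x) = {u : h(K,u) = ⟨x,u⟩}` of `K` at `x`. -/
noncomputable def normalCone {n : ℕ} (K : Set (EuclideanSpace ℝ (Fin n)))
    (x : EuclideanSpace ℝ (Fin n)) : Set (EuclideanSpace ℝ (Fin n)) :=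
  {u | suppFn K u = ⟪x, u⟫}

/-- The dimension of the affine span of a set. -/
noncomputable def adim {n : ℕ} (A : Set (EuclideanSpace ℝ (Fin n))) : ℕ :=
  Module.finrank ℝ (affineSpan ℝ A).direction

/-- `S` is a support set of `K`: `S = {x ∈ K : ⟨x,u⟩ = h(K,u)}` for some `u ≠ 0`. -/
noncomputable def IsSupportSet {n : ℕ} (K S : Set (EuclideanSpace ℝ (Fin n))) : Prop :=
  ∃ u : EuclideanSpace ℝ (Fin n), u ≠ 0 ∧ S = {x ∈ K | ⟪x, u⟫ = suppFn K u}

lemma le_suppFn {n : ℕ} {B : Set (EuclideanSpace ℝ (Fin n))} (hB : IsCompact B)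
    {y : EuclideanSpace ℝ (Fin n)} (hy : y ∈ B) (u : EuclideanSpace ℝ (Fin n)) :
    ⟪y, u⟫ ≤ suppFn B u := by
  refine le_csSup (hB.image ?_).bddAbove ⟨y, hy, rfl⟩
  fun_prop

lemma suppFn_pos {n : ℕ} {B : Set (EuclideanSpace ℝ (Fin n))} (hB : IsCompact B)
    (hBsymm : B = -B) (hBint : (interior B).Nonempty)
    {u : EuclideanSpace ℝ (Fin n)} (hu : u ≠ 0) : 0 < suppFn B u := by
  obtain ⟨b, hb⟩ := hBint
  have hcont : Filter.Tendsto (fun t : ℝ => b + t • u) (nhdsWithin 0 (Ioi 0)) (nhds b) := by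
    have : Continuous (fun t : ℝ => b + t • u) := by fun_prop
    simpa using (this.tendsto 0).mono_left nhdsWithin_le_nhds
  obtain ⟨t, htB, ht⟩ := ((hcont.eventually (mem_interior_iff_mem_nhds.1 hb)).and
    self_mem_nhdsWithin).exists
  have hneg : -b ∈ B := by
    rw [hBsymm]
    simpa using interior_subset hb
  have h1 := le_suppFn hB htB u
  have h2 := le_suppFn hB hneg u
  rw [inner_add_left, real_inner_smul_left] at h1
  rw [inner_neg_left] at h2
  have h3 : 0 < t * ⟪u, u⟫ := mul_pos ht (real_inner_self_pos.2 hu)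
  linarith

/-- Antipodal points of `B` on opposite supporting hyperplanes cannot be covered by a smaller
translated homothet of `B`. -/
lemma circR_pair {n : ℕ} {B : Set (EuclideanSpace ℝ (Fin n))} (hB : IsCompact B)
    (hBsymm : B = -B) (hBint : (interior B).Nonempty)
    {u x : EuclideanSpace ℝ (Fin n)} (hu : u ≠ 0) (hxB : x ∈ B) (hx : ⟪x, u⟫ = suppFn B u) :
    circR {x, -x} B = 1 := by
  have hneg : -x ∈ B := by
    rw [hBsymm]
    simpa using hxB
  have hpos := suppFn_pos hB hBsymm hBint hu
  refine IsLeast.csInf_eq ⟨⟨zero_le_one, 0, ?_⟩, ?_⟩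
  · simp [insert_subset_iff, hxB, hneg]
  · rintro ρ ⟨hρ, c, hc⟩
    obtain ⟨_, ⟨b₁, hb₁, rfl⟩, _, rfl, e₁⟩ := hc (mem_insert x _)
    obtain ⟨_, ⟨b₂, hb₂, rfl⟩, _, rfl, e₂⟩ := hc (mem_insert_of_mem x rfl)
    have hb₂' : -b₂ ∈ B := by
      rw [hBsymm]
      simpa using hb₂
    have h1 := le_suppFn hB hb₁ u
    have h2 := le_suppFn hB hb₂' u
    have f₁ := congrArg (fun z => ⟪z, u⟫) e₁
    have f₂ := congrArg (fun z => ⟪z, u⟫) e₂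
    simp only [inner_add_left, real_inner_smul_left, inner_neg_left] at f₁ f₂ h2
    nlinarith [mul_le_mul_of_nonneg_left h1 hρ, mul_le_mul_of_nonneg_left h2 hρ]

lemma mem_ccSet_pair {n : ℕ} {B : Set (EuclideanSpace ℝ (Fin n))} (hBsymm : B = -B)
    {x c : EuclideanSpace ℝ (Fin n)} (hR : circR {x, -x} B = 1)
    (h1 : x + c ∈ B) (h2 : x - c ∈ B) : c ∈ ccSet {x, -x} B := by
  have h1' : -(x + c) ∈ B := by
    rw [hBsymm]
    simpa using h1
  rw [ccSet, mem_ofPred_eq, hR, one_smul]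
  rintro y (rfl | rfl)
  · exact ⟨_, h2, c, rfl, by simp⟩
  · exact ⟨_, h1', c, rfl, by simp⟩

lemma exists_add_sub_mem_of_mem_intrinsicInterior {n : ℕ}
    {S : Set (EuclideanSpace ℝ (Fin n))} {x v : EuclideanSpace ℝ (Fin n)}
    (hx : x ∈ intrinsicInterior ℝ S) (hv : v ∈ (affineSpan ℝ S).direction) :
    ∃ ε : ℝ, 0 < ε ∧ x + ε • v ∈ S ∧ x - ε • v ∈ S := by
  obtain ⟨y, hy, rfl⟩ := mem_intrinsicInterior.1 hx
  have hmem : ∀ t : ℝ, (y : EuclideanSpace ℝ (Fin n)) + t • v ∈ affineSpan ℝ S := fun t => by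
    rw [add_comm]
    exact AffineSubspace.vadd_mem_of_mem_direction (Submodule.smul_mem _ t hv) y.2
  have hcont : Continuous (fun t : ℝ => (⟨_, hmem t⟩ : affineSpan ℝ S)) := by
    fun_prop
  have hnhds : ∀ᶠ t : ℝ in nhds 0, (y : EuclideanSpace ℝ (Fin n)) + t • v ∈ S := by
    have : (⟨_, hmem 0⟩ : affineSpan ℝ S) = y := by
      ext1
      simp
    have hS := mem_interior_iff_mem_nhds.1 hy
    rw [← this] at hS
    exact (hcont.tendsto 0).eventually hS
  have hneg : ∀ᶠ t : ℝ in nhds 0, (y : EuclideanSpace ℝ (Fin n)) + (-t) • v ∈ S := by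
    have : Filter.Tendsto (fun t : ℝ => -t) (nhds 0) (nhds 0) := by
      simpa using (continuous_neg (G := ℝ)).tendsto 0
    exact this.eventually hnhds
  obtain ⟨t, ⟨h1, h2⟩, ht⟩ := (((hnhds.and hneg).filter_mono nhdsWithin_le_nhds).and
    (self_mem_nhdsWithin (s := Ioi (0 : ℝ)))).exists
  exact ⟨t, ht, h1, by simpa [sub_eq_add_neg] using h2⟩

lemma adim_le_adim_ccSet {n : ℕ} {B S : Set (EuclideanSpace ℝ (Fin n))} (hB : IsCompact B)
    (hBsymm : B = -B) (hBint : (interior B).Nonempty) (hS : IsSupportSet B S)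
    {x : EuclideanSpace ℝ (Fin n)} (hx : x ∈ intrinsicInterior ℝ S) :
    adim S ≤ adim (ccSet {x, -x} B) := by
  obtain ⟨u, hu, hSu⟩ := hS
  have hSB : S ⊆ B := fun y hy => by
    rw [hSu] at hy
    exact hy.1
  have hxS := intrinsicInterior_subset hx
  have hR : circR {x, -x} B = 1 :=
    circR_pair hB hBsymm hBint hu (hSB hxS) (by rw [hSu] at hxS; exact hxS.2)
  refine Submodule.finrank_mono fun v hv => ?_
  obtain ⟨ε, hε, h1, h2⟩ := exists_add_sub_mem_of_mem_intrinsicInterior hx hv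
  have hc : ε • v ∈ ccSet {x, -x} B := mem_ccSet_pair hBsymm hR (hSB h1) (hSB h2)
  have h0 : (0 : EuclideanSpace ℝ (Fin n)) ∈ ccSet {x, -x} B :=
    mem_ccSet_pair hBsymm hR (by simpa using hSB hxS) (by simpa using hSB hxS)
  rw [direction_affineSpan]
  have := vsub_mem_vectorSpan ℝ hc h0
  rw [vsub_eq_sub, sub_zero] at this
  exact (Submodule.smul_mem_iff _ hε.ne').1 this

lemma IsSupportSet.convex {n : ℕ} {B S : Set (EuclideanSpace ℝ (Fin n))} (hB : Convex ℝ B)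
    (hS : IsSupportSet B S) : Convex ℝ S := by
  obtain ⟨u, -, rfl⟩ := hS
  rintro y ⟨hy, hyu⟩ z ⟨hz, hzu⟩ a b ha hb hab
  refine ⟨hB hy hz ha hb hab, ?_⟩
  rw [inner_add_left, real_inner_smul_left, real_inner_smul_left, hyu, hzu, ← add_mul, hab,
    one_mul]

/-- (c_k) ⇒ (b_k) in normed spaces: a support set of dimension `> k` produces a
two-point set with a Chebyshev set of dimension `> k`; indeed `{x, −x}` works for any
`x` in the relative interior of the support set. -/
theorem support_set_dim_gt_imp_two_points {n : ℕ} (hn : 2 ≤ n)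
    (B : Set (EuclideanSpace ℝ (Fin n))) (hB : IsConvexBody B)
    (hBsymm : B = -B) (hBint : (interior B).Nonempty)
    (k : ℕ) (hk : k ≤ n - 2)
    (S : Set (EuclideanSpace ℝ (Fin n))) (hS : IsSupportSet B S)
    (hSdim : k < adim S) :
    (∃ x₁ x₂ : EuclideanSpace ℝ (Fin n), k < adim (ccSet {x₁, x₂} B)) ∧
    ∀ x ∈ intrinsicInterior ℝ S, k < adim (ccSet {x, -x} B) := by
  have key : ∀ x ∈ intrinsicInterior ℝ S, k < adim (ccSet {x, -x} B) := fun x hx =>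
    hSdim.trans_le (adim_le_adim_ccSet hB.2.1 hBsymm hBint hS hx)
  refine ⟨?_, key⟩
  have hne : S.Nonempty := by
    rw [nonempty_iff_ne_empty]
    rintro rfl
    rw [adim, AffineSubspace.span_empty, AffineSubspace.direction_bot, finrank_bot] at hSdim
    exact Nat.not_lt_zero k hSdim
  obtain ⟨x, hx⟩ := hne.intrinsicInterior (hS.convex hB.2.2)
  exact ⟨x, -x, key x hx⟩
end

section
/- Let C ⊆ ℝⁿ be a convex body with 0 in its interior, let K ⊆ C be a convex body with R(K,C) = 1, let x₁,…,x_m ∈ K ∩ bd(C), let uᵢ ∈ N(C,xᵢ) \ {0} and λᵢ > 0 for i = 1,…,m with Σᵢ λᵢuᵢ = 0. Then for every circumcenter v ∈ cc(K,C) one has ⟨v,uᵢ⟩ = 0 for all i = 1,…,m. -/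
/-!
A circumcenter `v` satisfies `x i - v ∈ C`, because `x i ∈ K ⊆ C + v`. Since `u i` is an outer
normal of `C` at `x i`, this gives `⟪x i - v, u i⟫ ≤ h(C, u i) = ⟪x i, u i⟫`, that is,
`0 ≤ ⟪v, u i⟫`. The sum of these nonnegative numbers with positive weights `lam i` is
`⟪v, ∑ lam i • u i⟫ = 0`, so each of them vanishes.
-/

open Set Pointwise RealInnerProductSpace

/-- Compactness makes the supremum in `suppFn` a genuine upper bound. -/
theorem inner_le_suppFn {n : ℕ} {C : Set (EuclideanSpace ℝ (Fin n))} (hC : IsCompact C)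
    {y : EuclideanSpace ℝ (Fin n)} (hy : y ∈ C) (u : EuclideanSpace ℝ (Fin n)) :
    ⟪y, u⟫ ≤ suppFn C u :=
  le_csSup (hC.image (by fun_prop)).bddAbove (mem_image_of_mem _ hy)

/-- If `Σ λᵢuᵢ = 0` with `λᵢ > 0` for outer normals `uᵢ` at points `xᵢ ∈ K ∩ bd(C)`,
then every circumcenter `v` of `K` satisfies `⟨v,uᵢ⟩ = 0` for all `i`. -/
theorem circumcenter_orthogonal_to_normals {n m : ℕ}
    (C K : Set (EuclideanSpace ℝ (Fin n))) (hC : IsConvexBody C)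
    (hC0 : 0 ∈ interior C) (hK : IsConvexBody K) (hKC : K ⊆ C)
    (hR : circR K C = 1)
    (x u : Fin m → EuclideanSpace ℝ (Fin n)) (lam : Fin m → ℝ)
    (hx : ∀ i, x i ∈ K ∩ frontier C)
    (hu : ∀ i, u i ∈ normalCone C (x i) \ {0})
    (hlam : ∀ i, 0 < lam i)
    (hsum : ∑ i, lam i • u i = 0) :
    ∀ v ∈ ccSet K C, ∀ i, ⟪v, u i⟫ = 0 := by
  intro v hv
  have hnn : ∀ i, 0 ≤ ⟪v, u i⟫ := by
    intro i
    have hvi : K ⊆ circR K C • C + {v} := hv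
    rw [hR, one_smul] at hvi
    obtain ⟨c, hc, w, hw, hcw⟩ := Set.mem_add.1 (hvi (hx i).1)
    rw [Set.mem_singleton_iff] at hw
    have h1 : suppFn C (u i) = ⟪x i, u i⟫ := (hu i).1
    have h2 := inner_le_suppFn hC.2.1 hc (u i)
    rw [h1, ← hcw, hw, inner_add_left] at h2
    linarith
  have hs : ∑ i, lam i * ⟪v, u i⟫ = 0 := by
    simpa [inner_sum, inner_smul_right] using congrArg (fun z => ⟪v, z⟫) hsum
  intro i
  have h0 := (Finset.sum_eq_zero_iff_of_nonneg
    fun j _ => mul_nonneg (hlam j).le (hnn j)).1 hs i (Finset.mem_univ i)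
  exact (mul_eq_zero.1 h0).resolve_left (hlam i).ne'
end
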